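/- The 9×9 real transfer matrix T(μ) of the S=2 asymmetric VBS state has characteristic polynomial (X − λ₁(μ))·(X − λ₂(μ))·(X − λ₃(μ))·(X − λ₄(μ))²·(X − λ₅(μ))²·(X − λ₆(μ))²; in particular its eigenvalues are λ₁, λ₂, λ₃ (each simple) and λ₄, λ₅, λ₆ (each of algebraic multiplicity two). This holds for every μ ∈ [0,1]. -/

import Mathlib

/-!
The matrix `A⁽ᵐ⁾` raises the spin index by exactly `m`, so every summand `A⁽ᵐ⁾ ⊗ A⁽ᵐ⁾` of the
transfer matrix preserves the difference `i - j` of the two indices, and `T` splits into five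
sectors of sizes 1, 2, 3, 2, 1. Exchanging the two tensor factors fixes `T` and identifies the
sectors `d` and `-d`, which is why `λ₄`, `λ₅`, `λ₆` are double. Within each sector the matrix is
also invariant under reversing the order of the indices: the sector `d = 1` thereby splits
completely, and the sector `d = 0` into the odd eigenvalue `λ₃` and a quadratic with roots
`λ₁`, `λ₂`.
-/

open Matrix Kronecker

/-- The matrix `A⁽²⁾` of the S=2 asymmetric VBS state. -/
noncomputable def A2 (μ : ℝ) : Matrix (Fin 3) (Fin 3) ℝ :=
  !![0, 0, 0; 0, 0, 0; -μ, 0, 0]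

/-- The matrix `A⁽¹⁾` of the S=2 asymmetric VBS state (`κ = √(μ(1+μ²))`). -/
noncomputable def A1 (μ : ℝ) : Matrix (Fin 3) (Fin 3) ℝ :=
  (1 / 2 : ℝ) • !![0, 0, 0;
    Real.sqrt (μ * (1 + μ ^ 2)), 0, 0;
    0, -Real.sqrt (μ * (1 + μ ^ 2)), 0]

/-- The matrix `A⁽⁰⁾` of the S=2 asymmetric VBS state. -/
noncomputable def A0 (μ : ℝ) : Matrix (Fin 3) (Fin 3) ℝ :=
  (1 / Real.sqrt 6) • !![-μ, 0, 0; 0, 1 + μ ^ 2, 0; 0, 0, -μ]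

/-- The matrix `A⁽⁻¹⁾` of the S=2 asymmetric VBS state (`κ = √(μ(1+μ²))`). -/
noncomputable def Am1 (μ : ℝ) : Matrix (Fin 3) (Fin 3) ℝ :=
  (1 / 2 : ℝ) • !![0, -Real.sqrt (μ * (1 + μ ^ 2)), 0;
    0, 0, Real.sqrt (μ * (1 + μ ^ 2));
    0, 0, 0]

/-- The matrix `A⁽⁻²⁾` of the S=2 asymmetric VBS state. -/
noncomputable def Am2 (μ : ℝ) : Matrix (Fin 3) (Fin 3) ℝ :=
  !![0, 0, -μ; 0, 0, 0; 0, 0, 0]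

/-- The transfer matrix `T(μ)` of the S=2 asymmetric VBS state. -/
noncomputable def T (μ : ℝ) : Matrix (Fin 3 × Fin 3) (Fin 3 × Fin 3) ℝ :=
  A2 μ ⊗ₖ A2 μ + A1 μ ⊗ₖ A1 μ + A0 μ ⊗ₖ A0 μ + Am1 μ ⊗ₖ Am1 μ + Am2 μ ⊗ₖ Am2 μ

/-- The eigenvalue `λ₁(μ)`. -/
noncomputable def lam1 (μ : ℝ) : ℝ :=
  (1 + 9 * μ ^ 2 + μ ^ 4 +
    Real.sqrt (1 + 8 * μ ^ 2 + 63 * μ ^ 4 + 8 * μ ^ 6 + μ ^ 8)) / 12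

/-- The eigenvalue `λ₂(μ)`. -/
noncomputable def lam2 (μ : ℝ) : ℝ :=
  (1 + 9 * μ ^ 2 + μ ^ 4 -
    Real.sqrt (1 + 8 * μ ^ 2 + 63 * μ ^ 4 + 8 * μ ^ 6 + μ ^ 8)) / 12

/-- The eigenvalue `λ₃(μ)`. -/
noncomputable def lam3 (μ : ℝ) : ℝ := -5 * μ ^ 2 / 6

/-- The eigenvalue `λ₄(μ)`. -/
noncomputable def lam4 (μ : ℝ) : ℝ := μ * (1 + μ ^ 2) / 12

/-- The eigenvalue `λ₅(μ)`. -/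
noncomputable def lam5 (μ : ℝ) : ℝ := -5 * μ * (1 + μ ^ 2) / 12

/-- The eigenvalue `λ₆(μ)`. -/
noncomputable def lam6 (μ : ℝ) : ℝ := μ ^ 2 / 6

section WeightGrading

variable {m n R G : Type*} [AddCommGroup G]

/-- `M` is homogeneous of degree `d` for the grading of its index set by `w`: seen as an operator
on column vectors, it sends the basis vector `j` to a combination of basis vectors of weight
`w j + d`. For the spin matrices, `w` is the position of the index and `A⁽ᵐ⁾` has degree `m`. -/
def IsWeightHomogeneous [Zero R] (w : n → G) (d : G) (M : Matrix n n R) : Prop :=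
  ∀ ⦃i j⦄, M i j ≠ 0 → w i = w j + d

theorem IsWeightHomogeneous.blockTriangular_kronecker [MulZeroClass R] [Preorder G]
    {v : m → G} {w : n → G} {d : G} {M : Matrix m m R} {N : Matrix n n R}
    (hM : IsWeightHomogeneous v d M) (hN : IsWeightHomogeneous w d N) :
    (M ⊗ₖ N).BlockTriangular fun p ↦ v p.1 - w p.2 := by
  intro p q hqp
  by_contra hne
  have hv : v p.1 = v q.1 + d := hM (left_ne_zero_of_mul hne)
  have hw : w p.2 = w q.2 + d := hN (right_ne_zero_of_mul hne)
  refine hqp.ne ?_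
  simp only [hv, hw, add_sub_add_right_eq_sub]

end WeightGrading

theorem kronecker_submatrix_swap {l m n p R : Type*} [CommMagma R] (M : Matrix m n R)
    (N : Matrix l p R) : (M ⊗ₖ N).submatrix Prod.swap Prod.swap = N ⊗ₖ M :=
  Matrix.ext fun _ _ ↦ mul_comm _ _

theorem smul_kronecker_smul {l m n p R : Type*} [CommSemiring R] (a b : R) (M : Matrix m n R)
    (N : Matrix l p R) : (a • M) ⊗ₖ (b • N) = (a * b) • (M ⊗ₖ N) := by
  rw [smul_kronecker, kronecker_smul, smul_smul]

section SquareBlock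

variable {m n α R : Type*} [Fintype m] [DecidableEq m] [Fintype n] [DecidableEq n]
  [DecidableEq α] [CommRing R]

theorem charpoly_toSquareBlock_eq_charpoly_submatrix (M : Matrix n n R) {b : n → α} {k : α}
    {f : m → n} (hf : f.Injective) (hb : ∀ i, b i = k ↔ ∃ x, f x = i) :
    (M.toSquareBlock b k).charpoly = (M.submatrix f f).charpoly := by
  let e : m ≃ {i // b i = k} := (Equiv.ofInjective f hf).trans (Equiv.subtypeEquivRight hb).symm
  have he : (M.toSquareBlock b k).submatrix e e = M.submatrix f f := rfl
  rw [← he, ← charpoly_reindex e.symm]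
  rfl

theorem charpoly_toSquareBlock_eq_of_submatrix_eq {M : Matrix n n R} (e : n ≃ n)
    (hM : M.submatrix e e = M) {b : n → α} {k l : α} (hb : ∀ i, b i = k ↔ b (e i) = l) :
    (M.toSquareBlock b k).charpoly = (M.toSquareBlock b l).charpoly := by
  let e' : {i // b i = k} ≃ {i // b i = l} := e.subtypeEquiv hb
  have he' : (M.toSquareBlock b l).submatrix e' e' = (M.submatrix e e).toSquareBlock b k := rfl
  rw [← charpoly_reindex e'.symm (M.toSquareBlock b l), reindex_apply, Equiv.symm_symm, he', hM]

end SquareBlock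

section ReversalSymmetric

open Polynomial

variable {R : Type*} [CommRing R]

theorem charpoly_reversalSymmetric_two (a b : R) :
    (!![a, b; b, a] : Matrix (Fin 2) (Fin 2) R).charpoly =
      (X - C (a + b)) * (X - C (a - b)) := by
  simp only [Matrix.charpoly, det_fin_two, charmatrix_apply_eq, charmatrix_apply_ne, of_apply,
    cons_val, ne_eq, Fin.reduceEq, not_false_eq_true, C_add, C_sub]
  ring

theorem charpoly_reversalSymmetric_three (a b c d : R) :
    (!![a, b, d; b, c, b; d, b, a] : Matrix (Fin 3) (Fin 3) R).charpoly =
      (X ^ 2 - C (a + d + c) * X + C ((a + d) * c - 2 * b ^ 2)) * (X - C (a - d)) := by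
  have hC : (C 2 : R[X]) = 2 := map_ofNat C 2
  simp only [Matrix.charpoly, det_fin_three, charmatrix_apply_eq, charmatrix_apply_ne, of_apply,
    cons_val, ne_eq, Fin.reduceEq, not_false_eq_true, C_add, C_sub, C_mul, C_pow, hC]
  ring

end ReversalSymmetric

theorem isWeightHomogeneous_A2 (μ : ℝ) :
    IsWeightHomogeneous (fun i : Fin 3 ↦ (i : ℤ)) 2 (A2 μ) := by
  intro i j; fin_cases i <;> fin_cases j <;> simp [A2]

theorem isWeightHomogeneous_A1 (μ : ℝ) :
    IsWeightHomogeneous (fun i : Fin 3 ↦ (i : ℤ)) 1 (A1 μ) := by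
  intro i j; fin_cases i <;> fin_cases j <;> simp [A1]

theorem isWeightHomogeneous_A0 (μ : ℝ) :
    IsWeightHomogeneous (fun i : Fin 3 ↦ (i : ℤ)) 0 (A0 μ) := by
  intro i j; fin_cases i <;> fin_cases j <;> simp [A0]

theorem isWeightHomogeneous_Am1 (μ : ℝ) :
    IsWeightHomogeneous (fun i : Fin 3 ↦ (i : ℤ)) (-1) (Am1 μ) := by
  intro i j; fin_cases i <;> fin_cases j <;> simp [Am1]

theorem isWeightHomogeneous_Am2 (μ : ℝ) :
    IsWeightHomogeneous (fun i : Fin 3 ↦ (i : ℤ)) (-2) (Am2 μ) := by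
  intro i j; fin_cases i <;> fin_cases j <;> simp [Am2]

/-- The quantity conserved by the transfer matrix: the difference of the spin indices of the two
tensor factors. Its level sets are the sectors of `T`. -/
def spinDiff (p : Fin 3 × Fin 3) : ℤ := (p.1 : ℤ) - p.2

theorem blockTriangular_T (μ : ℝ) : (T μ).BlockTriangular spinDiff :=
  have h2 := (isWeightHomogeneous_A2 μ).blockTriangular_kronecker (isWeightHomogeneous_A2 μ)
  have h1 := (isWeightHomogeneous_A1 μ).blockTriangular_kronecker (isWeightHomogeneous_A1 μ)
  have h0 := (isWeightHomogeneous_A0 μ).blockTriangular_kronecker (isWeightHomogeneous_A0 μ)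
  have hm1 := (isWeightHomogeneous_Am1 μ).blockTriangular_kronecker (isWeightHomogeneous_Am1 μ)
  have hm2 := (isWeightHomogeneous_Am2 μ).blockTriangular_kronecker (isWeightHomogeneous_Am2 μ)
  (((h2.add h1).add h0).add hm1).add hm2

theorem T_submatrix_swap (μ : ℝ) : (T μ).submatrix Prod.swap Prod.swap = T μ := by
  simp only [T, submatrix_add, Pi.add_apply, kronecker_submatrix_swap]

theorem charpoly_T_toSquareBlock_neg (μ : ℝ) (d : ℤ) :
    ((T μ).toSquareBlock spinDiff (-d)).charpoly = ((T μ).toSquareBlock spinDiff d).charpoly :=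
  charpoly_toSquareBlock_eq_of_submatrix_eq (Equiv.prodComm _ _) (T_submatrix_swap μ) fun p ↦ by
    simp [spinDiff]; lia

theorem charpoly_T_eq_mul_charpoly_toSquareBlock (μ : ℝ) :
    (T μ).charpoly = ((T μ).toSquareBlock spinDiff 0).charpoly *
      ((T μ).toSquareBlock spinDiff 1).charpoly ^ 2 *
      ((T μ).toSquareBlock spinDiff 2).charpoly ^ 2 := by
  have hsectors : Finset.univ.image spinDiff = {0, 1, -1, 2, -2} := by decide
  rw [(blockTriangular_T μ).charpoly, hsectors, Finset.prod_insert (by decide),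
    Finset.prod_insert (by decide), Finset.prod_insert (by decide),
    Finset.prod_insert (by decide), Finset.prod_singleton, charpoly_T_toSquareBlock_neg,
    charpoly_T_toSquareBlock_neg]
  ring

theorem A1_kronecker_self {μ : ℝ} (hμ : 0 ≤ μ) :
    A1 μ ⊗ₖ A1 μ = (μ * (1 + μ ^ 2) / 4) •
      (!![0, 0, 0; 1, 0, 0; 0, -1, 0] ⊗ₖ !![0, 0, 0; 1, 0, 0; 0, -1, 0]) := by
  have hA1 : A1 μ = (√(μ * (1 + μ ^ 2)) / 2) • !![0, 0, 0; 1, 0, 0; 0, -1, 0] := by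
    simp [A1, div_eq_inv_mul]
  rw [hA1, smul_kronecker_smul, div_mul_div_comm, Real.mul_self_sqrt (by positivity)]
  norm_num

theorem A0_kronecker_self (μ : ℝ) :
    A0 μ ⊗ₖ A0 μ = (1 / 6 : ℝ) •
      (!![-μ, 0, 0; 0, 1 + μ ^ 2, 0; 0, 0, -μ] ⊗ₖ !![-μ, 0, 0; 0, 1 + μ ^ 2, 0; 0, 0, -μ]) := by
  rw [A0, smul_kronecker_smul, div_mul_div_comm, Real.mul_self_sqrt (by norm_num), one_mul]

theorem Am1_kronecker_self {μ : ℝ} (hμ : 0 ≤ μ) :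
    Am1 μ ⊗ₖ Am1 μ = (μ * (1 + μ ^ 2) / 4) •
      (!![0, -1, 0; 0, 0, 1; 0, 0, 0] ⊗ₖ !![0, -1, 0; 0, 0, 1; 0, 0, 0]) := by
  have hAm1 : Am1 μ = (√(μ * (1 + μ ^ 2)) / 2) • !![0, -1, 0; 0, 0, 1; 0, 0, 0] := by
    simp [Am1, div_eq_inv_mul]
  rw [hAm1, smul_kronecker_smul, div_mul_div_comm, Real.mul_self_sqrt (by positivity)]
  norm_num

theorem T_submatrix_sector_zero {μ : ℝ} (hμ : 0 ≤ μ) :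
    (T μ).submatrix (fun i : Fin 3 ↦ (i, i)) (fun i ↦ (i, i)) =
      !![μ ^ 2 / 6, μ * (1 + μ ^ 2) / 4, μ ^ 2;
         μ * (1 + μ ^ 2) / 4, (1 + μ ^ 2) ^ 2 / 6, μ * (1 + μ ^ 2) / 4;
         μ ^ 2, μ * (1 + μ ^ 2) / 4, μ ^ 2 / 6] := by
  rw [T, A1_kronecker_self hμ, A0_kronecker_self, Am1_kronecker_self hμ]
  ext i j
  fin_cases i <;> fin_cases j <;> simp [A2, Am2] <;> ring

theorem T_submatrix_sector_one {μ : ℝ} (hμ : 0 ≤ μ) :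
    (T μ).submatrix (fun i : Fin 2 ↦ (i.succ, i.castSucc)) (fun i ↦ (i.succ, i.castSucc)) =
      !![-(μ * (1 + μ ^ 2)) / 6, -(μ * (1 + μ ^ 2)) / 4;
         -(μ * (1 + μ ^ 2)) / 4, -(μ * (1 + μ ^ 2)) / 6] := by
  rw [T, A1_kronecker_self hμ, A0_kronecker_self, Am1_kronecker_self hμ]
  ext i j
  fin_cases i <;> fin_cases j <;> simp [A2, Am2] <;> ring

theorem T_apply_two_zero (μ : ℝ) : T μ (2, 0) (2, 0) = μ ^ 2 / 6 := by
  rw [T, A0_kronecker_self]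
  simp [A2, A1, Am1, Am2, pow_two, div_eq_inv_mul]

theorem lam1_add_lam2 (μ : ℝ) : lam1 μ + lam2 μ = (1 + 9 * μ ^ 2 + μ ^ 4) / 6 := by
  unfold lam1 lam2
  ring

theorem lam1_mul_lam2 (μ : ℝ) : lam1 μ * lam2 μ = 5 * μ ^ 2 * (1 + μ ^ 2) ^ 2 / 72 := by
  have hdisc : √(1 + 8 * μ ^ 2 + 63 * μ ^ 4 + 8 * μ ^ 6 + μ ^ 8) ^ 2 =
      1 + 8 * μ ^ 2 + 63 * μ ^ 4 + 8 * μ ^ 6 + μ ^ 8 := Real.sq_sqrt (by positivity)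
  unfold lam1 lam2
  linear_combination (-1 / 144) * hdisc

section SectorCharpoly

open Polynomial

theorem charpoly_T_toSquareBlock_zero {μ : ℝ} (hμ : 0 ≤ μ) :
    ((T μ).toSquareBlock spinDiff 0).charpoly =
      (X - C (lam1 μ)) * (X - C (lam2 μ)) * (X - C (lam3 μ)) := by
  have hsum : μ ^ 2 / 6 + μ ^ 2 + (1 + μ ^ 2) ^ 2 / 6 = lam1 μ + lam2 μ := by
    rw [lam1_add_lam2]; ring
  have hprod : (μ ^ 2 / 6 + μ ^ 2) * ((1 + μ ^ 2) ^ 2 / 6) - 2 * (μ * (1 + μ ^ 2) / 4) ^ 2 =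
      lam1 μ * lam2 μ := by
    rw [lam1_mul_lam2]; ring
  have hlam3 : μ ^ 2 / 6 - μ ^ 2 = lam3 μ := by unfold lam3; ring
  rw [charpoly_toSquareBlock_eq_charpoly_submatrix (f := fun i : Fin 3 ↦ (i, i)) _ (by decide)
    (by decide), T_submatrix_sector_zero hμ, charpoly_reversalSymmetric_three, hsum, hprod,
    hlam3, C_add, C_mul]
  ring

theorem charpoly_T_toSquareBlock_one {μ : ℝ} (hμ : 0 ≤ μ) :
    ((T μ).toSquareBlock spinDiff 1).charpoly = (X - C (lam4 μ)) * (X - C (lam5 μ)) := by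
  have hlam4 : -(μ * (1 + μ ^ 2)) / 6 - -(μ * (1 + μ ^ 2)) / 4 = lam4 μ := by unfold lam4; ring
  have hlam5 : -(μ * (1 + μ ^ 2)) / 6 + -(μ * (1 + μ ^ 2)) / 4 = lam5 μ := by unfold lam5; ring
  rw [charpoly_toSquareBlock_eq_charpoly_submatrix
    (f := fun i : Fin 2 ↦ (i.succ, i.castSucc)) _ (by decide) (by decide),
    T_submatrix_sector_one hμ, charpoly_reversalSymmetric_two, hlam4, hlam5, mul_comm]

theorem charpoly_T_toSquareBlock_two (μ : ℝ) :
    ((T μ).toSquareBlock spinDiff 2).charpoly = X - C (lam6 μ) := by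
  rw [charpoly_toSquareBlock_eq_charpoly_submatrix (f := fun _ : Fin 1 ↦ (2, 0)) _ (by decide)
    (by decide), Matrix.charpoly, det_fin_one, charmatrix_apply_eq, submatrix_apply,
    T_apply_two_zero, lam6]

theorem charpoly_transfer_S2_general (μ : ℝ) (hμ : 0 ≤ μ) :
    (T μ).charpoly =
      (X - C (lam1 μ)) * (X - C (lam2 μ)) * (X - C (lam3 μ)) *
        (X - C (lam4 μ)) ^ 2 * (X - C (lam5 μ)) ^ 2 * (X - C (lam6 μ)) ^ 2 := by
  rw [charpoly_T_eq_mul_charpoly_toSquareBlock, charpoly_T_toSquareBlock_zero hμ,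
    charpoly_T_toSquareBlock_one hμ, charpoly_T_toSquareBlock_two, mul_pow]
  ring

end SectorCharpoly

open Polynomial in
/-- The characteristic polynomial of the S=2 transfer matrix `T(μ)` is
`(X−λ₁)(X−λ₂)(X−λ₃)(X−λ₄)²(X−λ₅)²(X−λ₆)²`, so its eigenvalues are `λ₁, λ₂, λ₃`
(each simple) and `λ₄, λ₅, λ₆` (each of algebraic multiplicity two),
for every `μ ∈ [0,1]`. -/
theorem charpoly_transfer_S2 (μ : ℝ) (hμ : μ ∈ Set.Icc (0 : ℝ) 1) :
    (T μ).charpoly =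
      (X - C (lam1 μ)) * (X - C (lam2 μ)) * (X - C (lam3 μ)) *
        (X - C (lam4 μ)) ^ 2 * (X - C (lam5 μ)) ^ 2 * (X - C (lam6 μ)) ^ 2 :=
  charpoly_transfer_S2_general μ hμ.1
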